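/- Equip C(𝒫;ℝ) with the sup norm ‖u‖∞ and C(𝒫;ℝ)⁴ with the norm ‖N‖ = max_{1≤i≤4} ‖N_i‖∞. Then for every σ > 0 the operator 𝒯^σ : C(𝒫;ℝ)⁴ → C(𝒫;ℝ)⁴ is continuous. -/

import Mathlib

open Set MeasureTheory

noncomputable section

/-- The Broadwell collision term `Q(N) = 2cS (N₂N₃ - N₁N₄)` (indexing `N₁ = M 0`, …). -/
def QQ (c S : ℝ) (M : Fin 4 → ℝ → ℝ → ℝ → ℝ) (t x y : ℝ) : ℝ :=
  2 * c * S * (M 1 t x y * M 2 t x y - M 0 t x y * M 3 t x y)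

/-- Signs of `Q` in the four Broadwell equations. -/
def sgn4 : Fin 4 → ℝ := ![1, -1, -1, 1]

/-- `x`-components of the four velocities. -/
def spX (c : ℝ) : Fin 4 → ℝ := ![c, 0, 0, -c]

/-- `y`-components of the four velocities. -/
def spY (c : ℝ) : Fin 4 → ℝ := ![0, c, -c, 0]

/-- Partial derivative in `t`. -/
def pdtF (f : ℝ → ℝ → ℝ → ℝ) (t x y : ℝ) : ℝ := deriv (fun s => f s x y) t

/-- Partial derivative in `x`. -/
def pdxF (f : ℝ → ℝ → ℝ → ℝ) (t x y : ℝ) : ℝ := deriv (fun s => f t s y) x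

/-- Partial derivative in `y`. -/
def pdyF (f : ℝ → ℝ → ℝ → ℝ) (t x y : ℝ) : ℝ := deriv (fun s => f t x s) y

/-- `f` possesses all three first-order partial derivatives at `p`. -/
def HasPartials (f : ℝ → ℝ → ℝ → ℝ) (p : ℝ × ℝ × ℝ) : Prop :=
  DifferentiableAt ℝ (fun s => f s p.2.1 p.2.2) p.1 ∧
  DifferentiableAt ℝ (fun s => f p.1 s p.2.2) p.2.1 ∧
  DifferentiableAt ℝ (fun s => f p.1 p.2.1 s) p.2.2

/-- Continuity of a curried function of three real variables on a set. -/
def Cont3 (f : ℝ → ℝ → ℝ → ℝ) (D : Set (ℝ × ℝ × ℝ)) : Prop :=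
  ContinuousOn (fun p : ℝ × ℝ × ℝ => f p.1 p.2.1 p.2.2) D

/-- Sup norm over `D` of a function of three variables. -/
def supNorm3 (D : Set (ℝ × ℝ × ℝ)) (f : ℝ → ℝ → ℝ → ℝ) : ℝ :=
  sSup ((fun p : ℝ × ℝ × ℝ => |f p.1 p.2.1 p.2.2|) '' D)

/-- `‖N‖ = max_i ‖N_i‖_∞` over `D`. -/
def norm4 (D : Set (ℝ × ℝ × ℝ)) (M : Fin 4 → ℝ → ℝ → ℝ → ℝ) : ℝ :=
  max (max (supNorm3 D (M 0)) (supNorm3 D (M 1))) (max (supNorm3 D (M 2)) (supNorm3 D (M 3)))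

/-- Sup norm over `D` of a function of two variables. -/
def supNorm2 (D : Set (ℝ × ℝ)) (f : ℝ → ℝ → ℝ) : ℝ :=
  sSup ((fun p : ℝ × ℝ => |f p.1 p.2|) '' D)

/-- `‖g‖₁` for a function of two variables: max of the sup norms of `g` and its two
first-order partial derivatives over `D`. -/
def norm1Two (D : Set (ℝ × ℝ)) (f : ℝ → ℝ → ℝ) : ℝ :=
  max (supNorm2 D f)
    (max (supNorm2 D (fun a b => deriv (fun u => f u b) a))
      (supNorm2 D (fun a b => deriv (fun v => f a v) b)))

/-- The space-time slab `T × [a₁,b₁] × [a₂,b₂]`. -/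
def PsetT (T : Set ℝ) (a₁ b₁ a₂ b₂ : ℝ) : Set (ℝ × ℝ × ℝ) := T ×ˢ Icc a₁ b₁ ×ˢ Icc a₂ b₂

/-- The spatial rectangle `[a₁,b₁] × [a₂,b₂]`. -/
def Rect2 (a₁ b₁ a₂ b₂ : ℝ) : Set (ℝ × ℝ) := Icc a₁ b₁ ×ˢ Icc a₂ b₂

/-- A function of two variables which is continuous and bounded on `D` with continuous
and bounded first-order partial derivatives on `D`. -/
def Smooth2 (D : Set (ℝ × ℝ)) (f : ℝ → ℝ → ℝ) : Prop :=
  ContinuousOn (fun p : ℝ × ℝ => f p.1 p.2) D ∧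
  (∀ p ∈ D, DifferentiableAt ℝ (fun u => f u p.2) p.1 ∧
    DifferentiableAt ℝ (fun v => f p.1 v) p.2) ∧
  ContinuousOn (fun p : ℝ × ℝ => deriv (fun u => f u p.2) p.1) D ∧
  ContinuousOn (fun p : ℝ × ℝ => deriv (fun v => f p.1 v) p.2) D ∧
  ∃ C, ∀ p ∈ D, |f p.1 p.2| ≤ C ∧
    |deriv (fun u => f u p.2) p.1| ≤ C ∧ |deriv (fun v => f p.1 v) p.2| ≤ C

/-- Nonnegativity of a function of two variables on `D`. -/
def Nonneg2 (D : Set (ℝ × ℝ)) (f : ℝ → ℝ → ℝ) : Prop := ∀ p ∈ D, 0 ≤ f p.1 p.2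

/-- The initial data `N0` and boundary data `B1, B2, B3, B4` are nonnegative, continuous
and bounded with continuous bounded first-order partial derivatives, and satisfy the
compatibility conditions at time `t0`. -/
def NiceData (T : Set ℝ) (t0 a₁ b₁ a₂ b₂ : ℝ) (N0 : Fin 4 → ℝ → ℝ → ℝ)
    (B1 B2 B3 B4 : ℝ → ℝ → ℝ) : Prop :=
  (∀ i, Smooth2 (Rect2 a₁ b₁ a₂ b₂) (N0 i) ∧ Nonneg2 (Rect2 a₁ b₁ a₂ b₂) (N0 i)) ∧
  (Smooth2 (T ×ˢ Icc a₂ b₂) B1 ∧ Nonneg2 (T ×ˢ Icc a₂ b₂) B1) ∧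
  (Smooth2 (T ×ˢ Icc a₁ b₁) B2 ∧ Nonneg2 (T ×ˢ Icc a₁ b₁) B2) ∧
  (Smooth2 (T ×ˢ Icc a₁ b₁) B3 ∧ Nonneg2 (T ×ˢ Icc a₁ b₁) B3) ∧
  (Smooth2 (T ×ˢ Icc a₂ b₂) B4 ∧ Nonneg2 (T ×ˢ Icc a₂ b₂) B4) ∧
  (∀ y ∈ Icc a₂ b₂, N0 0 a₁ y = B1 t0 y) ∧
  (∀ x ∈ Icc a₁ b₁, N0 1 x a₂ = B2 t0 x) ∧
  (∀ x ∈ Icc a₁ b₁, N0 2 x b₂ = B3 t0 x) ∧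
  (∀ y ∈ Icc a₂ b₂, N0 3 b₁ y = B4 t0 y)

/-- `N` is a classical solution of the initial-boundary value problem for the planar
four-velocity Broadwell model on `T × [a₁,b₁] × [a₂,b₂]`, with initial time `t0`,
initial data `N0` and boundary data `B1, B2, B3, B4`. -/
def IsSol (c S : ℝ) (T : Set ℝ) (t0 a₁ b₁ a₂ b₂ : ℝ) (N0 : Fin 4 → ℝ → ℝ → ℝ)
    (B1 B2 B3 B4 : ℝ → ℝ → ℝ) (N : Fin 4 → ℝ → ℝ → ℝ → ℝ) : Prop :=
  (∀ i, Cont3 (N i) (PsetT T a₁ b₁ a₂ b₂)) ∧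
  (∀ i, ∀ p ∈ interior (PsetT T a₁ b₁ a₂ b₂), HasPartials (N i) p) ∧
  (∀ i, ∀ p ∈ interior (PsetT T a₁ b₁ a₂ b₂),
    pdtF (N i) p.1 p.2.1 p.2.2 + spX c i * pdxF (N i) p.1 p.2.1 p.2.2 +
      spY c i * pdyF (N i) p.1 p.2.1 p.2.2 = sgn4 i * QQ c S N p.1 p.2.1 p.2.2) ∧
  (∀ i, ∀ x ∈ Icc a₁ b₁, ∀ y ∈ Icc a₂ b₂, N i t0 x y = N0 i x y) ∧
  (∀ t ∈ T, ∀ y ∈ Icc a₂ b₂, N 0 t a₁ y = B1 t y) ∧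
  (∀ t ∈ T, ∀ x ∈ Icc a₁ b₁, N 1 t x a₂ = B2 t x) ∧
  (∀ t ∈ T, ∀ x ∈ Icc a₁ b₁, N 2 t x b₂ = B3 t x) ∧
  (∀ t ∈ T, ∀ y ∈ Icc a₂ b₂, N 3 t b₁ y = B4 t y)

/-- The operator `𝒯`, defined by integration along the characteristics. -/
def Tcal (c S τ a₁ b₁ a₂ b₂ : ℝ) (N0 : Fin 4 → ℝ → ℝ → ℝ) (B1 B2 B3 B4 : ℝ → ℝ → ℝ)
    (M : Fin 4 → ℝ → ℝ → ℝ → ℝ) : Fin 4 → ℝ → ℝ → ℝ → ℝ :=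
  ![fun t x y =>
      if a₁ ≤ x - c * (t - τ) then
        (∫ s in τ..t, QQ c S M s (x + c * (s - t)) y) + N0 0 (x - c * (t - τ)) y
      else
        (∫ s in (t - (x - a₁) / c)..t, QQ c S M s (x + c * (s - t)) y) +
          B1 (t - (x - a₁) / c) y,
    fun t x y =>
      if a₂ ≤ y - c * (t - τ) then
        (∫ s in τ..t, -QQ c S M s x (y + c * (s - t))) + N0 1 x (y - c * (t - τ))
      else
        (∫ s in (t - (y - a₂) / c)..t, -QQ c S M s x (y + c * (s - t))) +
          B2 (t - (y - a₂) / c) x,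
    fun t x y =>
      if y + c * (t - τ) ≤ b₂ then
        (∫ s in τ..t, -QQ c S M s x (y - c * (s - t))) + N0 2 x (y + c * (t - τ))
      else
        (∫ s in (t - (b₂ - y) / c)..t, -QQ c S M s x (y - c * (s - t))) +
          B3 (t - (b₂ - y) / c) x,
    fun t x y =>
      if x + c * (t - τ) ≤ b₁ then
        (∫ s in τ..t, QQ c S M s (x - c * (s - t)) y) + N0 3 (x + c * (t - τ)) y
      else
        (∫ s in (t - (b₁ - x) / c)..t, QQ c S M s (x - c * (s - t)) y) +
          B4 (t - (b₁ - x) / c) y]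

/-- `ρ(|M|) = |M₁| + |M₂| + |M₃| + |M₄|`. -/
def rhoA (M : Fin 4 → ℝ → ℝ → ℝ → ℝ) (t x y : ℝ) : ℝ :=
  |M 0 t x y| + |M 1 t x y| + |M 2 t x y| + |M 3 t x y|

/-- `Q(|M|)`. -/
def QQa (c S : ℝ) (M : Fin 4 → ℝ → ℝ → ℝ → ℝ) (t x y : ℝ) : ℝ :=
  2 * c * S * (|M 1 t x y| * |M 2 t x y| - |M 0 t x y| * |M 3 t x y|)

/-- `Q_i^σ(|M|) = σ ρ(|M|) |M_i| ± Q(|M|)`. -/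
def Qsig (c S σ : ℝ) (i : Fin 4) (M : Fin 4 → ℝ → ℝ → ℝ → ℝ) (t x y : ℝ) : ℝ :=
  σ * rhoA M t x y * |M i t x y| + sgn4 i * QQa c S M t x y

/-- Duhamel formula with integrating factor along the `i`-th characteristic, starting at
time `t0` with datum `datum`. -/
def duh (c S σ : ℝ) (i : Fin 4) (M : Fin 4 → ℝ → ℝ → ℝ → ℝ) (t0 t x y datum : ℝ) : ℝ :=
  ((∫ s in t0..t,
      Real.exp (σ * ∫ r in t0..s,
        rhoA M r (x + spX c i * (r - t)) (y + spY c i * (r - t))) *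
        Qsig c S σ i M s (x + spX c i * (s - t)) (y + spY c i * (s - t))) + datum) *
    Real.exp (-(σ * ∫ s in t0..t, rhoA M s (x + spX c i * (s - t)) (y + spY c i * (s - t))))

/-- The operator `𝒯^σ`. -/
def Tsig (c S σ τ a₁ b₁ a₂ b₂ : ℝ) (N0 : Fin 4 → ℝ → ℝ → ℝ) (B1 B2 B3 B4 : ℝ → ℝ → ℝ)
    (M : Fin 4 → ℝ → ℝ → ℝ → ℝ) : Fin 4 → ℝ → ℝ → ℝ → ℝ :=
  ![fun t x y =>
      if a₁ ≤ x - c * (t - τ) then duh c S σ 0 M τ t x y (N0 0 (x - c * (t - τ)) y)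
      else duh c S σ 0 M (t - (x - a₁) / c) t x y (B1 (t - (x - a₁) / c) y),
    fun t x y =>
      if a₂ ≤ y - c * (t - τ) then duh c S σ 1 M τ t x y (N0 1 x (y - c * (t - τ)))
      else duh c S σ 1 M (t - (y - a₂) / c) t x y (B2 (t - (y - a₂) / c) x),
    fun t x y =>
      if y + c * (t - τ) ≤ b₂ then duh c S σ 2 M τ t x y (N0 2 x (y + c * (t - τ)))
      else duh c S σ 2 M (t - (b₂ - y) / c) t x y (B3 (t - (b₂ - y) / c) x),
    fun t x y =>
      if x + c * (t - τ) ≤ b₁ then duh c S σ 3 M τ t x y (N0 3 (x + c * (t - τ)) y)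
      else duh c S σ 3 M (t - (b₁ - x) / c) t x y (B4 (t - (b₁ - x) / c) y)]

/-- Complement of the four exceptional planes. -/
def offPlanes (c τ a₁ b₁ a₂ b₂ : ℝ) : Set (ℝ × ℝ × ℝ) :=
  {p | p.2.1 - c * (p.1 - τ) ≠ a₁ ∧ p.2.2 - c * (p.1 - τ) ≠ a₂ ∧
    p.2.2 + c * (p.1 - τ) ≠ b₂ ∧ p.2.1 + c * (p.1 - τ) ≠ b₁}

/-- The interior of `𝒫` minus the four exceptional planes. -/
def Dset (c τ τ' a₁ b₁ a₂ b₂ : ℝ) : Set (ℝ × ℝ × ℝ) :=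
  (Ioo τ τ' ×ˢ Ioo a₁ b₁ ×ˢ Ioo a₂ b₂) ∩ offPlanes c τ a₁ b₁ a₂ b₂

/-- `u` has first-order partial derivatives on `D`, continuous and bounded there. -/
def DerivReg (D : Set (ℝ × ℝ × ℝ)) (u : ℝ → ℝ → ℝ → ℝ) : Prop :=
  (∀ p ∈ D, HasPartials u p) ∧
  Cont3 (pdtF u) D ∧ Cont3 (pdxF u) D ∧ Cont3 (pdyF u) D ∧
  ∃ C, ∀ p ∈ D, |pdtF u p.1 p.2.1 p.2.2| ≤ C ∧
    |pdxF u p.1 p.2.1 p.2.2| ≤ C ∧ |pdyF u p.1 p.2.1 p.2.2| ≤ C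

/-- Membership in the space `E`: continuity on `𝒫` plus regularity of the first-order
partial derivatives off the four exceptional planes. -/
def memE (c τ τ' a₁ b₁ a₂ b₂ : ℝ) (u : ℝ → ℝ → ℝ → ℝ) : Prop :=
  Cont3 u (PsetT (Icc τ τ') a₁ b₁ a₂ b₂) ∧ DerivReg (Dset c τ τ' a₁ b₁ a₂ b₂) u

/-- `‖u‖₁`: the max of the sup norm of `u` over `P` and of the sup norms of its
first-order partial derivatives over `D`. -/
def norm1E (P D : Set (ℝ × ℝ × ℝ)) (u : ℝ → ℝ → ℝ → ℝ) : ℝ :=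
  max (supNorm3 P u)
    (max (supNorm3 D (pdtF u)) (max (supNorm3 D (pdxF u)) (supNorm3 D (pdyF u))))

/-- `𝒩(N) = max_i ‖N_i‖₁`. -/
def NN4 (P D : Set (ℝ × ℝ × ℝ)) (N : Fin 4 → ℝ → ℝ → ℝ → ℝ) : ℝ :=
  max (max (norm1E P D (N 0)) (norm1E P D (N 1)))
    (max (norm1E P D (N 2)) (norm1E P D (N 3)))

/-- The convex set `𝓜_R = {N ∈ E⁴ : 𝒩(N) ≤ R}`. -/
def MR (c τ τ' a₁ b₁ a₂ b₂ R : ℝ) : Set (Fin 4 → ℝ → ℝ → ℝ → ℝ) :=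
  {N | (∀ i, memE c τ τ' a₁ b₁ a₂ b₂ (N i)) ∧
    NN4 (PsetT (Icc τ τ') a₁ b₁ a₂ b₂) (Dset c τ τ' a₁ b₁ a₂ b₂) N ≤ R}

/-- The transported initial datum `N̄_i^τ`. -/
def barN0 (c τ : ℝ) (N0 : Fin 4 → ℝ → ℝ → ℝ) (i : Fin 4) : ℝ → ℝ → ℝ → ℝ :=
  fun t x y => N0 i (x - spX c i * (t - τ)) (y - spY c i * (t - τ))

/-- The transported boundary data `N̄₁⁻, N̄₂⁻, N̄₃⁺, N̄₄⁺`. -/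
def barB (c a₁ b₁ a₂ b₂ : ℝ) (B1 B2 B3 B4 : ℝ → ℝ → ℝ) : Fin 4 → ℝ → ℝ → ℝ → ℝ :=
  ![fun t x y => B1 (t - (x - a₁) / c) y,
    fun t x y => B2 (t - (y - a₂) / c) x,
    fun t x y => B3 (t - (b₂ - y) / c) x,
    fun t x y => B4 (t - (b₁ - x) / c) y]

/-- Domain of definition of the transported initial datum `N̄_i^τ` inside `𝒫`. -/
def domBar0 (c τ a₁ b₁ a₂ b₂ : ℝ) (T : Set ℝ) (i : Fin 4) : Set (ℝ × ℝ × ℝ) :=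
  PsetT T a₁ b₁ a₂ b₂ ∩
    {p | (p.2.1 - spX c i * (p.1 - τ), p.2.2 - spY c i * (p.1 - τ)) ∈ Rect2 a₁ b₁ a₂ b₂}

/-- Domains of definition of the transported boundary data inside `𝒫`. -/
def domBarB (c a₁ b₁ a₂ b₂ : ℝ) (T : Set ℝ) : Fin 4 → Set (ℝ × ℝ × ℝ) :=
  ![PsetT T a₁ b₁ a₂ b₂ ∩ {p | p.1 - (p.2.1 - a₁) / c ∈ T},
    PsetT T a₁ b₁ a₂ b₂ ∩ {p | p.1 - (p.2.2 - a₂) / c ∈ T},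
    PsetT T a₁ b₁ a₂ b₂ ∩ {p | p.1 - (b₂ - p.2.2) / c ∈ T},
    PsetT T a₁ b₁ a₂ b₂ ∩ {p | p.1 - (b₁ - p.2.1) / c ∈ T}]

/-- `‖N̄_i^τ‖₁`. -/
def nb0 (c τ a₁ b₁ a₂ b₂ : ℝ) (T : Set ℝ) (N0 : Fin 4 → ℝ → ℝ → ℝ) (i : Fin 4) : ℝ :=
  norm1E (domBar0 c τ a₁ b₁ a₂ b₂ T i) (domBar0 c τ a₁ b₁ a₂ b₂ T i) (barN0 c τ N0 i)

/-- `‖N̄₁⁻‖₁`, `‖N̄₂⁻‖₁`, `‖N̄₃⁺‖₁`, `‖N̄₄⁺‖₁`. -/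
def nbB (c a₁ b₁ a₂ b₂ : ℝ) (T : Set ℝ) (B1 B2 B3 B4 : ℝ → ℝ → ℝ) (i : Fin 4) : ℝ :=
  norm1E (domBarB c a₁ b₁ a₂ b₂ T i) (domBarB c a₁ b₁ a₂ b₂ T i)
    (barB c a₁ b₁ a₂ b₂ B1 B2 B3 B4 i)

/-- `q`: the max of the `‖·‖₁` norms of the eight transported data functions. -/
def qval (c τ a₁ b₁ a₂ b₂ : ℝ) (T : Set ℝ) (N0 : Fin 4 → ℝ → ℝ → ℝ)
    (B1 B2 B3 B4 : ℝ → ℝ → ℝ) : ℝ :=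
  max
    (max (max (nb0 c τ a₁ b₁ a₂ b₂ T N0 0) (nb0 c τ a₁ b₁ a₂ b₂ T N0 1))
      (max (nb0 c τ a₁ b₁ a₂ b₂ T N0 2) (nb0 c τ a₁ b₁ a₂ b₂ T N0 3)))
    (max (max (nbB c a₁ b₁ a₂ b₂ T B1 B2 B3 B4 0) (nbB c a₁ b₁ a₂ b₂ T B1 B2 B3 B4 1))
      (max (nbB c a₁ b₁ a₂ b₂ T B1 B2 B3 B4 2) (nbB c a₁ b₁ a₂ b₂ T B1 B2 B3 B4 3)))

/-- `μ = 8 + 4/c + 8c`. -/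
def muc (c : ℝ) : ℝ := 8 + 4 / c + 8 * c

/-- `λ = 16 + 16c`. -/
def lamc (c : ℝ) : ℝ := 16 + 16 * c

/-- `δ = 4/c + 8 + 4c`. -/
def delc (c : ℝ) : ℝ := 4 / c + 8 + 4 * c

/-- `γ = 1 + c + 1/c`. -/
def gamc (c : ℝ) : ℝ := 1 + c + 1 / c

/-- `p_σ = (μ + λ σ R₀ (τ'-τ))(σ + cS)`. -/
def psig (c S σ R₀ τ τ' : ℝ) : ℝ := (muc c + lamc c * σ * R₀ * (τ' - τ)) * (σ + c * S)

/-- `q_σ = q (1 + δ σ R₀)`. -/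
def qsig (c σ R₀ q : ℝ) : ℝ := q * (1 + delc c * σ * R₀)

/-- `max_i ‖N_i‖₁` for a solution: sup norms of the `N_i` over `Dom`, and of their
first-order partial derivatives over the interior of `Dom`. -/
def NNSol (Dom : Set (ℝ × ℝ × ℝ)) (N : Fin 4 → ℝ → ℝ → ℝ → ℝ) : ℝ :=
  NN4 Dom (interior Dom) N

/-! Along the characteristic through `(t, x, y)`, issued at time `t₀` with datum `d`, moving the
integrating factor under the integral sign turns the Duhamel formula into
`∫ₜ₀ᵗ exp (-σ ∫ₛᵗ ρ) Qᵢ ds + d exp (-σ ∫ₜ₀ᵗ ρ)`, a locally Lipschitz function of the pair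
`(ρ, Qᵢ)`, which is itself a locally Lipschitz function of `M`. The constants depend only on `‖M‖`,
on the size of the data and on the length `t - t₀ ≤ τ' - τ`. Whether a point receives the initial or
the boundary datum does not depend on `M`, so `𝒯^σ` is Lipschitz on bounded sets. -/

theorem abs_mul_sub_mul_le {R : Type*} [Ring R] [LinearOrder R] [IsOrderedRing R]
    {a b a' b' A B α β : R} (ha : |a| ≤ A) (hb' : |b'| ≤ B) (hα : |a - a'| ≤ α)
    (hβ : |b - b'| ≤ β) : |a * b - a' * b'| ≤ A * β + α * B :=
  calc
    |a * b - a' * b'| = |a * (b - b') + (a - a') * b'| := by congr 1; noncomm_ring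
    _ ≤ |a| * |b - b'| + |a - a'| * |b'| := by
      simpa only [abs_mul] using abs_add_le (a * (b - b')) ((a - a') * b')
    _ ≤ A * β + α * B := by
      have hA : 0 ≤ A := (abs_nonneg _).trans ha
      have hα₀ : 0 ≤ α := (abs_nonneg _).trans hα
      gcongr

theorem abs_exp_sub_exp_le {a b B : ℝ} (ha : a ≤ B) (hb : b ≤ B) :
    |Real.exp a - Real.exp b| ≤ Real.exp B * |a - b| :=
  (convex_Iic B).norm_image_sub_le_of_norm_hasDerivWithin_le
    (fun s _ => (Real.hasDerivAt_exp s).hasDerivWithinAt)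
    (fun s hs => (Real.norm_of_nonneg (Real.exp_nonneg s)).trans_le (Real.exp_le_exp.2 hs)) hb ha

theorem abs_intervalIntegral_le {f : ℝ → ℝ} {u v L C : ℝ} (huv : u ≤ v) (hL : v - u ≤ L)
    (hf : ∀ s ∈ Icc u v, |f s| ≤ C) : |∫ s in u..v, f s| ≤ L * C := by
  have hC : 0 ≤ C := (abs_nonneg _).trans (hf u (left_mem_Icc.2 huv))
  calc
    |∫ s in u..v, f s| ≤ C * |v - u| :=
      intervalIntegral.norm_integral_le_of_norm_le_const (f := f) fun s hs =>
        hf s (Ioc_subset_Icc_self (uIoc_of_le huv ▸ hs))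
    _ ≤ L * C := by
      rw [abs_of_nonneg (sub_nonneg.2 huv), mul_comm]
      gcongr

theorem abs_intervalIntegral_sub_le {f g : ℝ → ℝ} {u v L C : ℝ} (huv : u ≤ v) (hL : v - u ≤ L)
    (hf : IntervalIntegrable f volume u v) (hg : IntervalIntegrable g volume u v)
    (hfg : ∀ s ∈ Icc u v, |f s - g s| ≤ C) :
    |(∫ s in u..v, f s) - ∫ s in u..v, g s| ≤ L * C := by
  rw [← intervalIntegral.integral_sub hf hg]
  exact abs_intervalIntegral_le huv hL hfg

/-- The value at time `v` of the solution of `N' + ρ N = q`, `N u = d`, written with an integrating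
factor as in the definition of `𝒯^σ`. -/
def duhamel (ρ q : ℝ → ℝ) (u v d : ℝ) : ℝ :=
  ((∫ s in u..v, Real.exp (∫ r in u..s, ρ r) * q s) + d) * Real.exp (-∫ s in u..v, ρ s)

section Duhamel

variable {ρ ρ' q q' : ℝ → ℝ} {u v L A B D α β d : ℝ}

theorem duhamel_eq_integral_add (hρ : IntervalIntegrable ρ volume u v) :
    duhamel ρ q u v d =
      (∫ s in u..v, Real.exp (-∫ r in s..v, ρ r) * q s) + d * Real.exp (-∫ r in u..v, ρ r) := by
  rw [duhamel, add_mul, ← intervalIntegral.integral_mul_const]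
  congr 1
  refine intervalIntegral.integral_congr fun s hs => ?_
  have hsplit : (∫ r in u..s, ρ r) + ∫ r in s..v, ρ r = ∫ r in u..v, ρ r :=
    intervalIntegral.integral_add_adjacent_intervals
      (hρ.mono_set (uIcc_subset_uIcc_left hs)) (hρ.mono_set (uIcc_subset_uIcc_right hs))
  calc
    Real.exp (∫ r in u..s, ρ r) * q s * Real.exp (-∫ r in u..v, ρ r)
      = Real.exp ((∫ r in u..s, ρ r) + -∫ r in u..v, ρ r) * q s := by rw [Real.exp_add]; ring
    _ = Real.exp (-∫ r in s..v, ρ r) * q s := by rw [← hsplit]; ring_nf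

theorem intervalIntegrable_exp_neg_integral_mul (hρ : IntervalIntegrable ρ volume u v)
    (hq : IntervalIntegrable q volume u v) :
    IntervalIntegrable (fun s => Real.exp (-∫ r in s..v, ρ r) * q s) volume u v :=
  hq.continuousOn_mul
    (intervalIntegral.continuousOn_primitive_interval_left
      ((intervalIntegrable_iff').1 hρ)).neg.rexp

theorem neg_integral_le (huv : u ≤ v) (hL : v - u ≤ L) (hA : ∀ s ∈ Icc u v, |ρ s| ≤ A) :
    -∫ s in u..v, ρ s ≤ L * A :=
  (neg_le_abs _).trans (abs_intervalIntegral_le huv hL hA)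

theorem abs_exp_neg_integral_le (huv : u ≤ v) (hL : v - u ≤ L)
    (hA : ∀ s ∈ Icc u v, |ρ s| ≤ A) : |Real.exp (-∫ s in u..v, ρ s)| ≤ Real.exp (L * A) := by
  rw [Real.abs_exp]
  exact Real.exp_le_exp.2 (neg_integral_le huv hL hA)

theorem abs_exp_neg_integral_sub_le (huv : u ≤ v) (hL : v - u ≤ L)
    (hρ : IntervalIntegrable ρ volume u v) (hρ' : IntervalIntegrable ρ' volume u v)
    (hA : ∀ s ∈ Icc u v, |ρ s| ≤ A) (hA' : ∀ s ∈ Icc u v, |ρ' s| ≤ A)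
    (hα : ∀ s ∈ Icc u v, |ρ s - ρ' s| ≤ α) :
    |Real.exp (-∫ s in u..v, ρ s) - Real.exp (-∫ s in u..v, ρ' s)| ≤
      Real.exp (L * A) * (L * α) :=
  calc
    |Real.exp (-∫ s in u..v, ρ s) - Real.exp (-∫ s in u..v, ρ' s)|
      ≤ Real.exp (L * A) * |(-∫ s in u..v, ρ s) - -∫ s in u..v, ρ' s| :=
        abs_exp_sub_exp_le (neg_integral_le huv hL hA) (neg_integral_le huv hL hA')
    _ ≤ Real.exp (L * A) * (L * α) := by
      rw [neg_sub_neg, abs_sub_comm]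
      gcongr
      exact abs_intervalIntegral_sub_le huv hL hρ hρ' hα

theorem abs_duhamel_sub_le (huv : u ≤ v) (hL : v - u ≤ L)
    (hρ : IntervalIntegrable ρ volume u v) (hρ' : IntervalIntegrable ρ' volume u v)
    (hq : IntervalIntegrable q volume u v) (hq' : IntervalIntegrable q' volume u v)
    (hA : ∀ s ∈ Icc u v, |ρ s| ≤ A) (hA' : ∀ s ∈ Icc u v, |ρ' s| ≤ A)
    (hB : ∀ s ∈ Icc u v, |q' s| ≤ B) (hα : ∀ s ∈ Icc u v, |ρ s - ρ' s| ≤ α)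
    (hβ : ∀ s ∈ Icc u v, |q s - q' s| ≤ β) (hd : |d| ≤ D) :
    |duhamel ρ q u v d - duhamel ρ' q' u v d| ≤
      Real.exp (L * A) * L * (β + (L * B + D) * α) := by
  rw [duhamel_eq_integral_add hρ, duhamel_eq_integral_add hρ', add_sub_add_comm, ← mul_sub]
  have hsource : |(∫ s in u..v, Real.exp (-∫ r in s..v, ρ r) * q s) -
      ∫ s in u..v, Real.exp (-∫ r in s..v, ρ' r) * q' s| ≤
      L * (Real.exp (L * A) * β + Real.exp (L * A) * (L * α) * B) := by
    refine abs_intervalIntegral_sub_le huv hL (intervalIntegrable_exp_neg_integral_mul hρ hq)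
      (intervalIntegrable_exp_neg_integral_mul hρ' hq') fun s hs => ?_
    have hsL : v - s ≤ L := by linarith [hs.1]
    have hsub : Icc s v ⊆ Icc u v := Icc_subset_Icc_left hs.1
    have hsub' : uIcc s v ⊆ uIcc u v := uIcc_subset_uIcc_right (Icc_subset_uIcc hs)
    exact abs_mul_sub_mul_le (abs_exp_neg_integral_le hs.2 hsL fun r hr => hA r (hsub hr))
      (hB s hs) (abs_exp_neg_integral_sub_le hs.2 hsL (hρ.mono_set hsub') (hρ'.mono_set hsub')
        (fun r hr => hA r (hsub hr)) (fun r hr => hA' r (hsub hr)) fun r hr => hα r (hsub hr))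
      (hβ s hs)
  have hdatum : |d * (Real.exp (-∫ r in u..v, ρ r) - Real.exp (-∫ r in u..v, ρ' r))| ≤
      D * (Real.exp (L * A) * (L * α)) := by
    rw [abs_mul]
    exact mul_le_mul hd (abs_exp_neg_integral_sub_le huv hL hρ hρ' hA hA' hα) (abs_nonneg _)
      ((abs_nonneg _).trans hd)
  calc
    _ ≤ L * (Real.exp (L * A) * β + Real.exp (L * A) * (L * α) * B) +
        D * (Real.exp (L * A) * (L * α)) := (abs_add_le _ _).trans (add_le_add hsource hdatum)
    _ = Real.exp (L * A) * L * (β + (L * B + D) * α) := by ring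

end Duhamel

section CollisionTerms

variable {c S σ K η t x y : ℝ} {M N : Fin 4 → ℝ → ℝ → ℝ → ℝ} {P : Set (ℝ × ℝ × ℝ)}

theorem abs_sgn4 (i : Fin 4) : |sgn4 i| = 1 := by
  fin_cases i <;> simp [sgn4]

theorem Qsig_eq (c S σ : ℝ) (i : Fin 4) (M : Fin 4 → ℝ → ℝ → ℝ → ℝ) (t x y : ℝ) :
    Qsig c S σ i M t x y = σ * (rhoA M t x y * |M i t x y|) +
      sgn4 i * (2 * (c * S) * (|M 1 t x y| * |M 2 t x y| - |M 0 t x y| * |M 3 t x y|)) := by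
  rw [Qsig, QQa, mul_assoc σ, mul_assoc 2 c S]

-- Both `Q_i^σ(|M|)` and the difference of two of its values have this shape.
theorem abs_collision_le {a b b' U V : ℝ} (i : Fin 4) (ha : |a| ≤ U) (hb : |b| ≤ V)
    (hb' : |b'| ≤ V) :
    |σ * a + sgn4 i * (2 * (c * S) * (b - b'))| ≤ |σ| * U + 4 * |c * S| * V :=
  calc
    |σ * a + sgn4 i * (2 * (c * S) * (b - b'))| ≤ |σ| * |a| + 2 * |c * S| * |b - b'| := by
      refine (abs_add_le _ _).trans_eq ?_
      rw [abs_mul, abs_mul (sgn4 i), abs_sgn4, one_mul, abs_mul, abs_mul 2, abs_two]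
    _ ≤ |σ| * U + 2 * |c * S| * (V + V) := by
      gcongr
      exact (abs_sub _ _).trans (add_le_add hb hb')
    _ = |σ| * U + 4 * |c * S| * V := by ring

theorem abs_rhoA_le (hM : ∀ j, |M j t x y| ≤ K) : |rhoA M t x y| ≤ 4 * K := by
  rw [rhoA, abs_of_nonneg (by positivity)]
  linarith [hM 0, hM 1, hM 2, hM 3]

theorem abs_rhoA_sub_le (hMN : ∀ j, |M j t x y - N j t x y| ≤ η) :
    |rhoA M t x y - rhoA N t x y| ≤ 4 * η := by
  have habs (j : Fin 4) := abs_le.1 ((abs_abs_sub_abs_le _ _).trans (hMN j))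
  rw [rhoA, rhoA, abs_le]
  constructor <;> linarith [habs 0, habs 1, habs 2, habs 3]

theorem abs_Qsig_le (i : Fin 4) (hM : ∀ j, |M j t x y| ≤ K) :
    |Qsig c S σ i M t x y| ≤ 4 * (|σ| + |c * S|) * K ^ 2 := by
  have hK : 0 ≤ K := (abs_nonneg _).trans (hM 0)
  have hprod (j k : Fin 4) : |(|M j t x y| * |M k t x y|)| ≤ K * K := by
    rw [abs_mul, abs_abs, abs_abs]
    exact mul_le_mul (hM j) (hM k) (abs_nonneg _) hK
  have hrho : |rhoA M t x y * (|M i t x y|)| ≤ 4 * K * K := by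
    rw [abs_mul, abs_abs]
    exact mul_le_mul (abs_rhoA_le hM) (hM i) (abs_nonneg _) (by positivity)
  rw [Qsig_eq]
  exact (abs_collision_le i hrho (hprod 1 2) (hprod 0 3)).trans_eq (by ring)

theorem abs_Qsig_sub_le (i : Fin 4) (hM : ∀ j, |M j t x y| ≤ K) (hN : ∀ j, |N j t x y| ≤ K)
    (hMN : ∀ j, |M j t x y - N j t x y| ≤ η) :
    |Qsig c S σ i M t x y - Qsig c S σ i N t x y| ≤ 8 * (|σ| + |c * S|) * K * η := by
  have habs (j : Fin 4) : |(|M j t x y| - |N j t x y|)| ≤ η :=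
    (abs_abs_sub_abs_le _ _).trans (hMN j)
  have hprod (j k : Fin 4) :
      |(|M j t x y| * |M k t x y| - |N j t x y| * |N k t x y|)| ≤ K * η + η * K :=
    abs_mul_sub_mul_le ((abs_abs _).trans_le (hM j)) ((abs_abs _).trans_le (hN k)) (habs j) (habs k)
  have hrho : |rhoA M t x y * |M i t x y| - rhoA N t x y * (|N i t x y|)| ≤
      4 * K * η + 4 * η * K :=
    abs_mul_sub_mul_le (abs_rhoA_le hM) ((abs_abs _).trans_le (hN i)) (abs_rhoA_sub_le hMN) (habs i)
  have hsplit := abs_collision_le (c := c) (S := S) (σ := σ) i hrho (hprod 1 2) (hprod 0 3)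
  rw [Qsig_eq, Qsig_eq]
  convert hsplit using 1
  · congr 1; ring
  · ring

theorem cont3_rhoA (hM : ∀ j, Cont3 (M j) P) : Cont3 (rhoA M) P :=
  (((hM 0).abs.add (hM 1).abs).add (hM 2).abs).add (hM 3).abs

theorem cont3_Qsig (i : Fin 4) (hM : ∀ j, Cont3 (M j) P) : Cont3 (Qsig c S σ i M) P :=
  ((continuousOn_const.mul (cont3_rhoA hM)).mul (hM i).abs).add <|
    continuousOn_const.mul <| continuousOn_const.mul <|
      ((hM 1).abs.mul (hM 2).abs).sub ((hM 0).abs.mul (hM 3).abs)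

end CollisionTerms

/-- The point at time `s` of the `i`-th characteristic through `(t, x, y)`. -/
def charPt (c : ℝ) (i : Fin 4) (t x y s : ℝ) : ℝ × ℝ × ℝ :=
  (s, x + spX c i * (s - t), y + spY c i * (s - t))

/-- The restriction of `f` to the `i`-th characteristic through `(t, x, y)`, as a function of
time. -/
def alongChar (c : ℝ) (i : Fin 4) (t x y : ℝ) (f : ℝ → ℝ → ℝ → ℝ) (s : ℝ) : ℝ :=
  f s (x + spX c i * (s - t)) (y + spY c i * (s - t))

/-- The Lipschitz constant of the Duhamel formula along one characteristic, where `L` bounds the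
travel time, `K` the densities and `D` the datum. -/
def duhLip (c S σ L K D : ℝ) : ℝ :=
  Real.exp (L * (4 * |σ| * K)) * L *
    (8 * (|σ| + |c * S|) * K + (L * (4 * (|σ| + |c * S|) * K ^ 2) + D) * (4 * |σ|))

section Characteristics

variable {c S σ L K D η t₀ t x y d : ℝ} {M N : Fin 4 → ℝ → ℝ → ℝ → ℝ} {i : Fin 4}
  {P : Set (ℝ × ℝ × ℝ)}

theorem duhLip_nonneg (hL : 0 ≤ L) (hK : 0 ≤ K) (hD : 0 ≤ D) : 0 ≤ duhLip c S σ L K D := by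
  unfold duhLip
  positivity

theorem duh_eq_duhamel : duh c S σ i M t₀ t x y d =
    duhamel (fun s => σ * alongChar c i t x y (rhoA M) s) (alongChar c i t x y (Qsig c S σ i M))
      t₀ t d := by
  simp only [duh, duhamel, alongChar, intervalIntegral.integral_const_mul]

theorem Cont3.intervalIntegrable_alongChar {f : ℝ → ℝ → ℝ → ℝ} (hf : Cont3 f P) (ht : t₀ ≤ t)
    (hP : ∀ s ∈ Icc t₀ t, charPt c i t x y s ∈ P) :
    IntervalIntegrable (alongChar c i t x y f) volume t₀ t := by
  have hchar : Continuous (charPt c i t x y) := by unfold charPt; fun_prop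
  exact (ContinuousOn.comp hf hchar.continuousOn hP).intervalIntegrable_of_Icc ht

theorem abs_duh_sub_le (cM : ∀ j, Cont3 (M j) P) (cN : ∀ j, Cont3 (N j) P)
    (hM : ∀ j, ∀ p ∈ P, |M j p.1 p.2.1 p.2.2| ≤ K) (hN : ∀ j, ∀ p ∈ P, |N j p.1 p.2.1 p.2.2| ≤ K)
    (hMN : ∀ j, ∀ p ∈ P, |M j p.1 p.2.1 p.2.2 - N j p.1 p.2.1 p.2.2| ≤ η) (ht : t₀ ≤ t)
    (hL : t - t₀ ≤ L) (hd : |d| ≤ D) (hP : ∀ s ∈ Icc t₀ t, charPt c i t x y s ∈ P) :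
    |duh c S σ i M t₀ t x y d - duh c S σ i N t₀ t x y d| ≤ duhLip c S σ L K D * η := by
  have hrho {N : Fin 4 → ℝ → ℝ → ℝ → ℝ} (hN : ∀ j, ∀ p ∈ P, |N j p.1 p.2.1 p.2.2| ≤ K) :
      ∀ s ∈ Icc t₀ t, |σ * alongChar c i t x y (rhoA N) s| ≤ 4 * |σ| * K := fun s hs => by
    rw [abs_mul, mul_comm 4, mul_assoc]
    gcongr
    exact abs_rhoA_le fun j => hN j _ (hP s hs)
  have hrho_sub : ∀ s ∈ Icc t₀ t, |σ * alongChar c i t x y (rhoA M) s -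
      σ * alongChar c i t x y (rhoA N) s| ≤ 4 * |σ| * η := fun s hs => by
    rw [← mul_sub, abs_mul, mul_comm 4, mul_assoc]
    gcongr
    exact abs_rhoA_sub_le fun j => hMN j _ (hP s hs)
  rw [duh_eq_duhamel, duh_eq_duhamel]
  refine (abs_duhamel_sub_le ht hL
    (((cont3_rhoA cM).intervalIntegrable_alongChar ht hP).const_mul σ)
    (((cont3_rhoA cN).intervalIntegrable_alongChar ht hP).const_mul σ)
    ((cont3_Qsig i cM).intervalIntegrable_alongChar ht hP)
    ((cont3_Qsig i cN).intervalIntegrable_alongChar ht hP) (hrho hM) (hrho hN)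
    (fun s hs => abs_Qsig_le i fun j => hN j _ (hP s hs)) hrho_sub
    (fun s hs => abs_Qsig_sub_le i (fun j => hM j _ (hP s hs)) (fun j => hN j _ (hP s hs))
      fun j => hMN j _ (hP s hs)) hd).trans_eq ?_
  rw [duhLip]
  ring

end Characteristics

/-- The distance from `(x, y)` to the wall through which the `i`-th characteristics enter the
rectangle. -/
def inflowDist (a₁ b₁ a₂ b₂ : ℝ) (i : Fin 4) (x y : ℝ) : ℝ :=
  ![x - a₁, y - a₂, b₂ - y, b₁ - x] i

section EntryPoint

variable {c S σ τ τ' a₁ b₁ a₂ b₂ D s t x y : ℝ} {T : Set ℝ} {N0 : Fin 4 → ℝ → ℝ → ℝ}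
  {B1 B2 B3 B4 : ℝ → ℝ → ℝ} {i : Fin 4}

theorem inflowDist_nonneg (hp : (t, x, y) ∈ PsetT T a₁ b₁ a₂ b₂) (i : Fin 4) :
    0 ≤ inflowDist a₁ b₁ a₂ b₂ i x y := by
  obtain ⟨-, ⟨hx₁, hx₂⟩, hy₁, hy₂⟩ := hp
  fin_cases i <;> simpa [inflowDist]

theorem Tsig_apply (M : Fin 4 → ℝ → ℝ → ℝ → ℝ) :
    Tsig c S σ τ a₁ b₁ a₂ b₂ N0 B1 B2 B3 B4 M i t x y =
      if c * (t - τ) ≤ inflowDist a₁ b₁ a₂ b₂ i x y then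
        duh c S σ i M τ t x y (barN0 c τ N0 i t x y)
      else
        duh c S σ i M (t - inflowDist a₁ b₁ a₂ b₂ i x y / c) t x y
          (barB c a₁ b₁ a₂ b₂ B1 B2 B3 B4 i t x y) := by
  fin_cases i <;>
    simp [Tsig, inflowDist, barN0, barB, spX, spY, le_sub_iff_add_le, add_comm]

theorem charPt_mem_PsetT (hc : 0 ≤ c) (hp : (t, x, y) ∈ PsetT T a₁ b₁ a₂ b₂) (hsT : s ∈ T)
    (hst : s ≤ t) (hs : c * (t - s) ≤ inflowDist a₁ b₁ a₂ b₂ i x y) :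
    charPt c i t x y s ∈ PsetT T a₁ b₁ a₂ b₂ := by
  obtain ⟨-, ⟨hx₁, hx₂⟩, hy₁, hy₂⟩ := hp
  have hpos : 0 ≤ c * (t - s) := mul_nonneg hc (sub_nonneg.2 hst)
  refine ⟨hsT, ?_⟩
  suffices x + spX c i * (s - t) ∈ Icc a₁ b₁ ∧ y + spY c i * (s - t) ∈ Icc a₂ b₂ from this
  rw [mem_Icc, mem_Icc]
  match i with
  | 0 | 1 | 2 | 3 =>
    simp only [spX, spY, inflowDist, Matrix.cons_val] at hs ⊢
    refine ⟨⟨?_, ?_⟩, ?_, ?_⟩ <;> linarith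

theorem mem_domBar0 (hp : (t, x, y) ∈ PsetT T a₁ b₁ a₂ b₂)
    (hfoot : charPt c i t x y τ ∈ PsetT T a₁ b₁ a₂ b₂) :
    (t, x, y) ∈ domBar0 c τ a₁ b₁ a₂ b₂ T i := by
  have hrect := hfoot.2
  simp only [charPt, ← neg_sub t τ, mul_neg, ← sub_eq_add_neg] at hrect
  exact ⟨hp, hrect⟩

theorem mem_domBarB (hp : (t, x, y) ∈ PsetT T a₁ b₁ a₂ b₂)
    (hentry : t - inflowDist a₁ b₁ a₂ b₂ i x y / c ∈ T) :
    (t, x, y) ∈ domBarB c a₁ b₁ a₂ b₂ T i := by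
  fin_cases i <;> exact ⟨hp, hentry⟩

theorem exists_Tsig_eq_duh (hc : 0 < c)
    (hN0 : ∀ i, ∀ p ∈ domBar0 c τ a₁ b₁ a₂ b₂ (Icc τ τ') i, |barN0 c τ N0 i p.1 p.2.1 p.2.2| ≤ D)
    (hB : ∀ i, ∀ p ∈ domBarB c a₁ b₁ a₂ b₂ (Icc τ τ') i,
      |barB c a₁ b₁ a₂ b₂ B1 B2 B3 B4 i p.1 p.2.1 p.2.2| ≤ D)
    (hp : (t, x, y) ∈ PsetT (Icc τ τ') a₁ b₁ a₂ b₂) (i : Fin 4) :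
    ∃ t₀ ∈ Icc τ t, ∃ d, |d| ≤ D ∧
      (∀ s ∈ Icc t₀ t, charPt c i t x y s ∈ PsetT (Icc τ τ') a₁ b₁ a₂ b₂) ∧
      ∀ M, Tsig c S σ τ a₁ b₁ a₂ b₂ N0 B1 B2 B3 B4 M i t x y = duh c S σ i M t₀ t x y d := by
  obtain ⟨ht₁, ht₂⟩ : t ∈ Icc τ τ' := hp.1
  set z := inflowDist a₁ b₁ a₂ b₂ i x y
  have hmem (t₀ : ℝ) (ht₀ : τ ≤ t₀) (hreach : c * (t - t₀) ≤ z) :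
      ∀ s ∈ Icc t₀ t, charPt c i t x y s ∈ PsetT (Icc τ τ') a₁ b₁ a₂ b₂ := fun s hs =>
    charPt_mem_PsetT hc.le hp ⟨ht₀.trans hs.1, hs.2.trans ht₂⟩ hs.2 <|
      (mul_le_mul_of_nonneg_left (sub_le_sub_left hs.1 t) hc.le).trans hreach
  by_cases hreach : c * (t - τ) ≤ z
  · have hpath := hmem τ le_rfl hreach
    exact ⟨τ, ⟨le_rfl, ht₁⟩, _, hN0 i _ (mem_domBar0 hp (hpath τ ⟨le_rfl, ht₁⟩)), hpath,
      fun M => by rw [Tsig_apply, if_pos hreach]⟩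
  · have hz₀ : 0 ≤ z / c := div_nonneg (inflowDist_nonneg hp i) hc.le
    have hzc : z / c ≤ t - τ := (div_le_iff₀' hc).2 (not_le.1 hreach).le
    have hentry : t - z / c ∈ Icc τ t := ⟨by linarith, by linarith⟩
    refine ⟨t - z / c, hentry, _, hB i _ (mem_domBarB hp ⟨hentry.1, hentry.2.trans ht₂⟩),
      hmem _ hentry.1 ?_, fun M => by rw [Tsig_apply, if_neg hreach]⟩
    rw [sub_sub_cancel, mul_div_cancel₀ z hc.ne']

end EntryPoint

section Data

variable {a₁ b₁ a₂ b₂ : ℝ} {N0 : Fin 4 → ℝ → ℝ → ℝ} {B1 B2 B3 B4 : ℝ → ℝ → ℝ} {T : Set ℝ}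

theorem Smooth2.exists_abs_le {D : Set (ℝ × ℝ)} {f : ℝ → ℝ → ℝ} (hf : Smooth2 D f) :
    ∃ C, ∀ p ∈ D, |f p.1 p.2| ≤ C := by
  obtain ⟨-, -, -, -, C, hC⟩ := hf
  exact ⟨C, fun p hp => (hC p hp).1⟩

theorem NiceData.exists_transported_le {t₀ : ℝ} (c τ : ℝ)
    (hdata : NiceData T t₀ a₁ b₁ a₂ b₂ N0 B1 B2 B3 B4) :
    ∃ D, 0 ≤ D ∧
      (∀ i, ∀ p ∈ domBar0 c τ a₁ b₁ a₂ b₂ T i, |barN0 c τ N0 i p.1 p.2.1 p.2.2| ≤ D) ∧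
      ∀ i, ∀ p ∈ domBarB c a₁ b₁ a₂ b₂ T i,
        |barB c a₁ b₁ a₂ b₂ B1 B2 B3 B4 i p.1 p.2.1 p.2.2| ≤ D := by
  obtain ⟨h0, ⟨h1, -⟩, ⟨h2, -⟩, ⟨h3, -⟩, ⟨h4, -⟩, -⟩ := hdata
  choose C₀ hC₀ using fun i => (h0 i).1.exists_abs_le
  obtain ⟨C₁, hC₁⟩ := h1.exists_abs_le
  obtain ⟨C₂, hC₂⟩ := h2.exists_abs_le
  obtain ⟨C₃, hC₃⟩ := h3.exists_abs_le
  obtain ⟨C₄, hC₄⟩ := h4.exists_abs_le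
  have hbarB (i : Fin 4) : ∀ p ∈ domBarB c a₁ b₁ a₂ b₂ T i,
      |barB c a₁ b₁ a₂ b₂ B1 B2 B3 B4 i p.1 p.2.1 p.2.2| ≤ ![C₁, C₂, C₃, C₄] i := by
    fin_cases i
    · exact fun p hp => hC₁ (p.1 - (p.2.1 - a₁) / c, p.2.2) ⟨hp.2, hp.1.2.2⟩
    · exact fun p hp => hC₂ (p.1 - (p.2.2 - a₂) / c, p.2.1) ⟨hp.2, hp.1.2.1⟩
    · exact fun p hp => hC₃ (p.1 - (b₂ - p.2.2) / c, p.2.1) ⟨hp.2, hp.1.2.1⟩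
    · exact fun p hp => hC₄ (p.1 - (b₁ - p.2.1) / c, p.2.2) ⟨hp.2, hp.1.2.2⟩
  obtain ⟨D, hD⟩ := (finite_range (Sum.elim C₀ ![C₁, C₂, C₃, C₄])).bddAbove
  have hle (j : Fin 4 ⊕ Fin 4) : Sum.elim C₀ ![C₁, C₂, C₃, C₄] j ≤ max 0 D :=
    le_max_of_le_right (hD (mem_range_self j))
  exact ⟨max 0 D, le_max_left 0 D, fun i p hp => (hC₀ i _ hp.2).trans (hle (.inl i)),
    fun i p hp => (hbarB i p hp).trans (hle (.inr i))⟩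

end Data

section SupNorm

variable {P : Set (ℝ × ℝ × ℝ)} {M N : Fin 4 → ℝ → ℝ → ℝ → ℝ} {r : ℝ}

theorem isCompact_PsetT {T : Set ℝ} (hT : IsCompact T) (a₁ b₁ a₂ b₂ : ℝ) :
    IsCompact (PsetT T a₁ b₁ a₂ b₂) :=
  hT.prod (isCompact_Icc.prod isCompact_Icc)

theorem abs_le_norm4 (hP : IsCompact P) (hM : ∀ i, Cont3 (M i) P) (i : Fin 4) :
    ∀ p ∈ P, |M i p.1 p.2.1 p.2.2| ≤ norm4 P M := fun p hp =>
  calc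
    |M i p.1 p.2.1 p.2.2| ≤ supNorm3 P (M i) :=
      le_csSup (hP.bddAbove_image (hM i).abs) (mem_image_of_mem _ hp)
    _ ≤ norm4 P M := by fin_cases i <;> simp [norm4]

theorem norm4_le (hr : 0 ≤ r) (hM : ∀ i, ∀ p ∈ P, |M i p.1 p.2.1 p.2.2| ≤ r) : norm4 P M ≤ r := by
  have hsup (i : Fin 4) : supNorm3 P (M i) ≤ r := Real.sSup_le (forall_mem_image.2 (hM i)) hr
  exact max_le (max_le (hsup 0) (hsup 1)) (max_le (hsup 2) (hsup 3))

theorem norm4_nonneg (P : Set (ℝ × ℝ × ℝ)) (M : Fin 4 → ℝ → ℝ → ℝ → ℝ) : 0 ≤ norm4 P M :=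
  le_max_of_le_left <| le_max_of_le_left <|
    Real.sSup_nonneg (forall_mem_image.2 fun _ _ => abs_nonneg _)

theorem norm4_le_norm4_sub_add (hP : IsCompact P) (hM : ∀ i, Cont3 (M i) P)
    (hN : ∀ i, Cont3 (N i) P) :
    norm4 P M ≤ norm4 P (fun i t x y => M i t x y - N i t x y) + norm4 P N := by
  refine norm4_le (add_nonneg (norm4_nonneg _ _) (norm4_nonneg _ _)) fun i p hp => ?_
  calc
    |M i p.1 p.2.1 p.2.2|
      ≤ |M i p.1 p.2.1 p.2.2 - N i p.1 p.2.1 p.2.2| + |N i p.1 p.2.1 p.2.2| := by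
        simpa only [sub_add_cancel] using
          abs_add_le (M i p.1 p.2.1 p.2.2 - N i p.1 p.2.1 p.2.2) (N i p.1 p.2.1 p.2.2)
    _ ≤ _ := add_le_add
      (abs_le_norm4 (M := fun i t x y => M i t x y - N i t x y) hP (fun j => (hM j).sub (hN j))
        i p hp) (abs_le_norm4 hP hN i p hp)

end SupNorm

section Continuity

variable {c S σ τ τ' a₁ b₁ a₂ b₂ D K : ℝ} {N0 : Fin 4 → ℝ → ℝ → ℝ} {B1 B2 B3 B4 : ℝ → ℝ → ℝ}
  {M N : Fin 4 → ℝ → ℝ → ℝ → ℝ}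

theorem norm4_Tsig_sub_le (hc : 0 < c) (hτ : τ ≤ τ') (hD : 0 ≤ D)
    (hN0 : ∀ i, ∀ p ∈ domBar0 c τ a₁ b₁ a₂ b₂ (Icc τ τ') i, |barN0 c τ N0 i p.1 p.2.1 p.2.2| ≤ D)
    (hB : ∀ i, ∀ p ∈ domBarB c a₁ b₁ a₂ b₂ (Icc τ τ') i,
      |barB c a₁ b₁ a₂ b₂ B1 B2 B3 B4 i p.1 p.2.1 p.2.2| ≤ D)
    (cM : ∀ i, Cont3 (M i) (PsetT (Icc τ τ') a₁ b₁ a₂ b₂))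
    (cN : ∀ i, Cont3 (N i) (PsetT (Icc τ τ') a₁ b₁ a₂ b₂))
    (hM : norm4 (PsetT (Icc τ τ') a₁ b₁ a₂ b₂) M ≤ K)
    (hN : norm4 (PsetT (Icc τ τ') a₁ b₁ a₂ b₂) N ≤ K) :
    norm4 (PsetT (Icc τ τ') a₁ b₁ a₂ b₂) (fun i t x y =>
        Tsig c S σ τ a₁ b₁ a₂ b₂ N0 B1 B2 B3 B4 M i t x y -
          Tsig c S σ τ a₁ b₁ a₂ b₂ N0 B1 B2 B3 B4 N i t x y) ≤
      duhLip c S σ (τ' - τ) K D *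
        norm4 (PsetT (Icc τ τ') a₁ b₁ a₂ b₂) (fun i t x y => M i t x y - N i t x y) := by
  have hP : IsCompact (PsetT (Icc τ τ') a₁ b₁ a₂ b₂) := isCompact_PsetT isCompact_Icc _ _ _ _
  have hK : 0 ≤ K := (norm4_nonneg _ _).trans hM
  refine norm4_le (mul_nonneg (duhLip_nonneg (sub_nonneg.2 hτ) hK hD) (norm4_nonneg _ _)) ?_
  rintro i ⟨t, x, y⟩ hp
  obtain ⟨t₀, ht₀, d, hd, hpath, hT⟩ := exists_Tsig_eq_duh (S := S) (σ := σ) hc hN0 hB hp i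
  simp only [hT]
  exact abs_duh_sub_le cM cN (fun j p hp => (abs_le_norm4 hP cM j p hp).trans hM)
    (fun j p hp => (abs_le_norm4 hP cN j p hp).trans hN)
    (abs_le_norm4 (M := fun i t x y => M i t x y - N i t x y) hP fun j => (cM j).sub (cN j))
    ht₀.2 (sub_le_sub hp.1.2 ht₀.1) hd hpath

theorem Tsig_continuous_general (hc : 0 < c) (hτ : τ ≤ τ') (hD : 0 ≤ D)
    (hN0 : ∀ i, ∀ p ∈ domBar0 c τ a₁ b₁ a₂ b₂ (Icc τ τ') i, |barN0 c τ N0 i p.1 p.2.1 p.2.2| ≤ D)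
    (hB : ∀ i, ∀ p ∈ domBarB c a₁ b₁ a₂ b₂ (Icc τ τ') i,
      |barB c a₁ b₁ a₂ b₂ B1 B2 B3 B4 i p.1 p.2.1 p.2.2| ≤ D)
    (cN : ∀ i, Cont3 (N i) (PsetT (Icc τ τ') a₁ b₁ a₂ b₂)) {ε : ℝ} (hε : 0 < ε) :
    ∃ η > 0, ∀ M : Fin 4 → ℝ → ℝ → ℝ → ℝ,
      (∀ i, Cont3 (M i) (PsetT (Icc τ τ') a₁ b₁ a₂ b₂)) →
      norm4 (PsetT (Icc τ τ') a₁ b₁ a₂ b₂) (fun i t x y => M i t x y - N i t x y) ≤ η →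
      norm4 (PsetT (Icc τ τ') a₁ b₁ a₂ b₂) (fun i t x y =>
        Tsig c S σ τ a₁ b₁ a₂ b₂ N0 B1 B2 B3 B4 M i t x y -
          Tsig c S σ τ a₁ b₁ a₂ b₂ N0 B1 B2 B3 B4 N i t x y) ≤ ε := by
  have hP : IsCompact (PsetT (Icc τ τ') a₁ b₁ a₂ b₂) := isCompact_PsetT isCompact_Icc _ _ _ _
  set K := 1 + norm4 (PsetT (Icc τ τ') a₁ b₁ a₂ b₂) N
  have hK : 0 ≤ K := add_nonneg zero_le_one (norm4_nonneg _ _)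
  have hC : 0 ≤ duhLip c S σ (τ' - τ) K D := duhLip_nonneg (sub_nonneg.2 hτ) hK hD
  obtain ⟨η, hη, hηε⟩ := exists_pos_mul_lt hε (duhLip c S σ (τ' - τ) K D)
  refine ⟨min 1 η, lt_min one_pos hη, fun M cM hMN => ?_⟩
  have hM : norm4 (PsetT (Icc τ τ') a₁ b₁ a₂ b₂) M ≤ K :=
    (norm4_le_norm4_sub_add hP cM cN).trans <|
      add_le_add_left (hMN.trans (min_le_left _ _)) _
  have hN : norm4 (PsetT (Icc τ τ') a₁ b₁ a₂ b₂) N ≤ K := le_add_of_nonneg_left zero_le_one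
  calc
    _ ≤ duhLip c S σ (τ' - τ) K D *
        norm4 (PsetT (Icc τ τ') a₁ b₁ a₂ b₂) (fun i t x y => M i t x y - N i t x y) :=
      norm4_Tsig_sub_le hc hτ hD hN0 hB cM cN hM hN
    _ ≤ duhLip c S σ (τ' - τ) K D * η := by gcongr; exact hMN.trans (min_le_right _ _)
    _ ≤ ε := hηε.le

end Continuity

/-- Continuity of the operator `𝒯^σ` on `C(𝒫;ℝ)⁴` for the sup norm, for every `σ > 0`. -/
theorem Tsig_continuous
    (c S τ τ' a₁ b₁ a₂ b₂ : ℝ) (hc : 0 < c) (hS : 0 < S)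
    (hτ : τ < τ') (ha : a₁ < b₁) (hb : a₂ < b₂)
    (N0 : Fin 4 → ℝ → ℝ → ℝ) (B1 B2 B3 B4 : ℝ → ℝ → ℝ)
    (hdata : NiceData (Icc τ τ') τ a₁ b₁ a₂ b₂ N0 B1 B2 B3 B4) :
    ∀ σ : ℝ, 0 < σ →
      ∀ N : Fin 4 → ℝ → ℝ → ℝ → ℝ, (∀ i, Cont3 (N i) (PsetT (Icc τ τ') a₁ b₁ a₂ b₂)) →
        ∀ ε > 0, ∃ η > 0, ∀ M : Fin 4 → ℝ → ℝ → ℝ → ℝ,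
          (∀ i, Cont3 (M i) (PsetT (Icc τ τ') a₁ b₁ a₂ b₂)) →
          norm4 (PsetT (Icc τ τ') a₁ b₁ a₂ b₂) (fun i t x y => M i t x y - N i t x y) ≤ η →
          norm4 (PsetT (Icc τ τ') a₁ b₁ a₂ b₂)
            (fun i t x y => Tsig c S σ τ a₁ b₁ a₂ b₂ N0 B1 B2 B3 B4 M i t x y - Tsig c S σ τ a₁ b₁ a₂ b₂ N0 B1 B2 B3 B4 N i t x y) ≤ ε := by
  obtain ⟨D, hD, hN0, hB⟩ := hdata.exists_transported_le c τ
  exact fun σ _ N cN ε hε => Tsig_continuous_general hc hτ.le hD hN0 hB cN hε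

end
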